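/- arXiv:2410.20694 — 2 statements merged into one kernel-verified Lean document; each statement's English description precedes it below -/
import Mathlib

section
/- Let n ≥ 1, let K ⊂ ℝⁿ be a convex body and let ν ∈ (0, |K|]. Then there exists a constant C = C(ν, K) > 0 such that for every convex body P ⊆ K with |P| ≥ ν and every integer k ≥ 1, one has |#(P ∩ ℤⁿ/k) − |P|·kⁿ| ≤ C·k^{n−1}. -/
open MeasureTheory Set

/-- The rescaled lattice `ℤⁿ/k` inside `ℝⁿ`. -/
def lpts (n k : ℕ) : Set (EuclideanSpace ℝ (Fin n)) :=
  {x | ∀ i, ∃ m : ℤ, (k : ℝ) * x i = (m : ℝ)}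

/-!
The number of integers in a bounded interval differs from its length by at most `1`. Both counting
integer points and Lebesgue measure on `ℝⁿ` are `n`-fold products of measures on `ℝ`, so we replace
one factor of the product at a time: by Fubini, each replacement changes the measure of a set all of
whose axis-parallel sections are intervals by at most the mass of the remaining `n - 1` factors on
a bounding box. For a box of side `O(k)` the total error is `O(k ^ (n - 1))`; dilating by `k` turns
points of `ℤⁿ/k` into integer points.
-/

section ProductMeasures

variable {α β : Type*} [MeasurableSpace α] [MeasurableSpace β]

theorem prod_real_eq_integral (μ : Measure α) (ρ : Measure β) [IsFiniteMeasure ρ]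
    {s : Set (α × β)} (hs : MeasurableSet s) :
    (μ.prod ρ).real s = ∫ x, ρ.real (Prod.mk x ⁻¹' s) ∂μ := by
  have h_meas : AEMeasurable (fun x ↦ ρ (Prod.mk x ⁻¹' s)) μ :=
    (measurable_measure_prodMk_left hs).aemeasurable
  simp only [Measure.real]
  rw [integral_toReal h_meas (.of_forall fun _ ↦ measure_lt_top _ _), Measure.prod_apply hs]

theorem abs_prod_real_sub_prod_real_le_right (μ : Measure α) [IsFiniteMeasure μ]
    {ρ σ : Measure β} [IsFiniteMeasure ρ] [IsFiniteMeasure σ] {s : Set (α × β)}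
    (hs : MeasurableSet s) {D : ℝ}
    (hD : ∀ x, |ρ.real (Prod.mk x ⁻¹' s) - σ.real (Prod.mk x ⁻¹' s)| ≤ D) :
    |(μ.prod ρ).real s - (μ.prod σ).real s| ≤ D * μ.real univ := by
  rw [prod_real_eq_integral μ ρ hs, prod_real_eq_integral μ σ hs,
    ← integral_sub (Measure.integrable_measure_prodMk_left hs (measure_ne_top _ _))
      (Measure.integrable_measure_prodMk_left hs (measure_ne_top _ _)), ← Real.norm_eq_abs]
  exact norm_integral_le_of_norm_le_const (ae_of_all μ hD)

theorem prod_real_preimage_swap (μ : Measure α) (ρ : Measure β) [IsFiniteMeasure μ]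
    [IsFiniteMeasure ρ] {s : Set (α × β)} (hs : MeasurableSet s) :
    (ρ.prod μ).real (Prod.swap ⁻¹' s) = (μ.prod ρ).real s :=
  Measure.measurePreserving_swap.measureReal_preimage hs.nullMeasurableSet

theorem abs_prod_real_sub_prod_real_le {μ ν : Measure α} [IsFiniteMeasure μ] [IsFiniteMeasure ν]
    {ρ σ : Measure β} [IsFiniteMeasure ρ] [IsFiniteMeasure σ] {s : Set (α × β)}
    (hs : MeasurableSet s) {D E : ℝ}
    (hD : ∀ y, |μ.real ((·, y) ⁻¹' s) - ν.real ((·, y) ⁻¹' s)| ≤ D)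
    (hE : ∀ x, |ρ.real (Prod.mk x ⁻¹' s) - σ.real (Prod.mk x ⁻¹' s)| ≤ E) :
    |(μ.prod ρ).real s - (ν.prod σ).real s| ≤ D * ρ.real univ + E * ν.real univ := by
  have h_first : |(μ.prod ρ).real s - (ν.prod ρ).real s| ≤ D * ρ.real univ := by
    rw [← prod_real_preimage_swap μ ρ hs, ← prod_real_preimage_swap ν ρ hs]
    exact abs_prod_real_sub_prod_real_le_right ρ (measurable_swap hs) hD
  have h_second : |(ν.prod ρ).real s - (ν.prod σ).real s| ≤ E * ν.real univ :=
    abs_prod_real_sub_prod_real_le_right ν hs hE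
  exact (abs_sub_le _ _ _).trans (add_le_add h_first h_second)

theorem measurable_fin_cons {n : ℕ} :
    Measurable fun p : α × (Fin n → α) ↦ (Fin.cons p.1 p.2 : Fin (n + 1) → α) :=
  measurable_pi_iff.2 <| Fin.cases measurable_fst fun i ↦
    (measurable_pi_apply i).comp measurable_snd

theorem pi_real_succ (μ : Measure α) [SigmaFinite μ] {n : ℕ} (P : Set (Fin (n + 1) → α)) :
    (Measure.pi fun _ ↦ μ).real P =
      (μ.prod (Measure.pi fun _ ↦ μ)).real
        ((fun p : α × (Fin n → α) ↦ (Fin.cons p.1 p.2 : Fin (n + 1) → α)) ⁻¹' P) := by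
  have h_cons := (measurePreserving_piFinSuccAbove (fun _ : Fin (n + 1) ↦ μ) 0).symm
  rw [Measure.real, Measure.real, ← h_cons.measure_preimage_equiv P]
  congr 2
  ext p
  simp [MeasurableEquiv.piFinSuccAbove_symm_apply, Fin.insertNthEquiv, Fin.insertNth_zero']

theorem abs_pi_real_sub_pi_real_le [Nonempty α] {μ ν : Measure α} [IsFiniteMeasure μ]
    [IsFiniteMeasure ν] {M D : ℝ} (hμ : μ.real univ ≤ M) (hν : ν.real univ ≤ M) {n : ℕ}
    {P : Set (Fin n → α)} (hP : MeasurableSet P)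
    (hD : ∀ x i, |μ.real (Function.update x i ⁻¹' P) - ν.real (Function.update x i ⁻¹' P)| ≤ D) :
    |(Measure.pi fun _ ↦ μ).real P - (Measure.pi fun _ ↦ ν).real P| ≤ n * D * M ^ (n - 1) := by
  induction n with
  | zero => simp [Subsingleton.elim (fun _ : Fin 0 ↦ μ) fun _ ↦ ν]
  | succ n ih =>
    obtain ⟨a⟩ := ‹Nonempty α›
    have hD_nonneg : 0 ≤ D := (abs_nonneg _).trans (hD (fun _ ↦ a) 0)
    have hM_nonneg : 0 ≤ M := measureReal_nonneg.trans hμ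
    have h_head (y : Fin n → α) : |μ.real ((Fin.cons (α := fun _ ↦ α) · y) ⁻¹' P) -
        ν.real ((Fin.cons (α := fun _ ↦ α) · y) ⁻¹' P)| ≤ D := by
      have h_section : Function.update (Fin.cons a y : Fin (n + 1) → α) 0 =
          (Fin.cons (α := fun _ ↦ α) · y) :=
        funext fun t ↦ Fin.update_cons_zero (α := fun _ ↦ α) a y t
      simpa only [h_section] using hD (Fin.cons a y) 0
    have h_tail (t : α) : |(Measure.pi fun _ ↦ μ).real (Fin.cons (α := fun _ ↦ α) t ⁻¹' P) -
        (Measure.pi fun _ ↦ ν).real (Fin.cons (α := fun _ ↦ α) t ⁻¹' P)| ≤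
          n * D * M ^ (n - 1) := by
      refine ih ((measurable_fin_cons.comp measurable_prodMk_left) hP) fun y i ↦ ?_
      simpa only [← preimage_comp, Function.comp_def, Fin.cons_update] using
        hD (Fin.cons t y) i.succ
    have h_mass : (Measure.pi fun _ : Fin n ↦ μ).real univ ≤ M ^ n := by
      simpa [Measure.real, Measure.pi_univ] using pow_le_pow_left₀ measureReal_nonneg hμ n
    rw [pi_real_succ μ, pi_real_succ ν]
    calc
      _ ≤ D * (Measure.pi fun _ : Fin n ↦ μ).real univ + n * D * M ^ (n - 1) * ν.real univ :=
        abs_prod_real_sub_prod_real_le (measurable_fin_cons hP) h_head h_tail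
      _ ≤ D * M ^ n + n * D * M ^ (n - 1) * M := by gcongr
      _ = (n + 1 : ℕ) * D * M ^ (n + 1 - 1) := by
        rw [mul_assoc _ _ M, Nat.add_sub_cancel]
        cases n with
        | zero => simp
        | succ n => rw [Nat.add_sub_cancel, ← pow_succ]; push_cast; ring

end ProductMeasures

section SeparatelyConvex

variable {ι : Type*} [DecidableEq ι] {P : Set (ι → ℝ)}

/-- A set in `ℝ^ι` is separately convex if it meets every line parallel to a coordinate axis in an
interval. Lattice points in such a set can be counted one coordinate at a time. -/
def SeparatelyConvex (P : Set (ι → ℝ)) : Prop :=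
  ∀ x i, (Function.update x i ⁻¹' P).OrdConnected

theorem SeparatelyConvex.preimage_smul (hP : SeparatelyConvex P) {c : ℝ} (hc : 0 ≤ c) :
    SeparatelyConvex ((c • ·) ⁻¹' P) := by
  intro x i
  have h_section : Function.update x i ⁻¹' ((c • ·) ⁻¹' P) =
      (c • ·) ⁻¹' (Function.update (c • x) i ⁻¹' P) := by
    ext t
    simp only [mem_preimage, Function.update_smul]
  rw [h_section]
  exact (hP _ i).preimage_mono (monotone_smul_left_of_nonneg hc)

theorem separatelyConvex_of_convex (hP : Convex ℝ P) : SeparatelyConvex P := by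
  intro x i
  have h_section : Function.update x i ⁻¹' P =
      LinearMap.single ℝ (fun _ ↦ ℝ) i ⁻¹' ((Function.update x i 0 + ·) ⁻¹' P) := by
    ext t
    have h_update : Function.update x i t = Function.update x i 0 + Pi.single i t := by
      simp [Pi.update_eq_sub_add_single]
    simp [h_update]
  rw [h_section]
  exact ((hP.translate_preimage_right _).linear_preimage _).ordConnected

end SeparatelyConvex

section IntegerPoints

theorem count_real_eq_ncard {α : Type*} [MeasurableSpace α] {s : Set α} (hs : MeasurableSet s) :
    Measure.count.real s = s.ncard := by
  rw [Measure.real, Measure.count_apply hs]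
  obtain h_fin | h_inf := s.finite_or_infinite
  · simp [← h_fin.cast_ncard_eq]
  · simp [h_inf.encard_eq, h_inf.ncard]

theorem pi_count {ι α : Type*} [Fintype ι] [Countable α] [MeasurableSpace α]
    [MeasurableSingletonClass α] :
    (Measure.pi fun _ : ι ↦ (Measure.count : Measure α)) = Measure.count :=
  Measure.ext_of_singleton fun x ↦ by simp

theorem ncard_intCast_preimage_Icc_le {a b : ℝ} (hab : a ≤ b) :
    (((↑) ⁻¹' Icc a b : Set ℤ).ncard : ℝ) ≤ b - a + 1 := by
  rw [Int.preimage_Icc, ← Finset.coe_Icc, ncard_coe_finset, Int.card_Icc,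
    ← Int.cast_natCast, Int.ofNat_toNat]
  push_cast
  exact max_le (by linarith [Int.floor_le b, Int.le_ceil a]) (by linarith)

theorem le_ncard_intCast_preimage_Ioo (a b : ℝ) :
    b - a - 1 ≤ (((↑) ⁻¹' Ioo a b : Set ℤ).ncard : ℝ) := by
  rw [Int.preimage_Ioo, ← Finset.coe_Ioo, ncard_coe_finset, Int.card_Ioo]
  calc
    b - a - 1 ≤ ((⌈b⌉ - ⌊a⌋ - 1 : ℤ) : ℝ) := by
      push_cast
      linarith [Int.le_ceil b, Int.floor_le a]
    _ ≤ (⌈b⌉ - ⌊a⌋ - 1).toNat := mod_cast Int.self_le_toNat _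

theorem finite_intCast_preimage {s : Set ℝ} (hs : Bornology.IsBounded s) :
    ((↑) ⁻¹' s : Set ℤ).Finite := by
  obtain ⟨r, hr⟩ := hs.subset_closedBall 0
  rw [Real.closedBall_eq_Icc] at hr
  refine Finite.subset ?_ (preimage_mono hr)
  rw [Int.preimage_Icc]
  exact finite_Icc _ _

theorem abs_ncard_intCast_preimage_sub_volume_le {s : Set ℝ} (hs : s.OrdConnected)
    (hb : Bornology.IsBounded s) :
    |(((↑) ⁻¹' s : Set ℤ).ncard : ℝ) - volume.real s| ≤ 1 := by
  obtain rfl | h_ne := s.eq_empty_or_nonempty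
  · simp
  set a := sInf s
  set b := sSup s
  have h_inner : Ioo a b ⊆ s :=
    IsConnected.Ioo_csInf_csSup_subset ⟨h_ne, hs.isPreconnected⟩ hb.bddBelow hb.bddAbove
  have h_outer : s ⊆ Icc a b := subset_Icc_csInf_csSup hb.bddBelow hb.bddAbove
  have hab : a ≤ b := Real.sInf_le_sSup s hb.bddBelow hb.bddAbove
  have h_vol : volume.real s = b - a := by
    refine le_antisymm ?_ ?_
    · rw [← Real.volume_real_Icc_of_le hab]
      exact measureReal_mono h_outer measure_Icc_lt_top.ne
    · rw [← Real.volume_real_Ioo_of_le hab]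
      exact measureReal_mono h_inner hb.measure_lt_top.ne
  have h_upper : ((↑) ⁻¹' s : Set ℤ).ncard ≤ b - a + 1 :=
    (Nat.cast_le.2 (ncard_le_ncard (preimage_mono h_outer)
      (finite_intCast_preimage (Metric.isBounded_Icc _ _)))).trans
        (ncard_intCast_preimage_Icc_le hab)
  have h_lower : b - a - 1 ≤ ((↑) ⁻¹' s : Set ℤ).ncard :=
    (le_ncard_intCast_preimage_Ioo a b).trans
      (Nat.cast_le.2 (ncard_le_ncard (preimage_mono h_inner) (finite_intCast_preimage hb)))
  rw [h_vol, abs_le]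
  constructor <;> linarith

/-- The counting measure of the integers in `[-R, R]`, as a measure on `ℝ`. Truncating makes it
finite, so that it can serve as a factor of a product measure. -/
noncomputable def truncatedIntCount (R : ℝ) : Measure ℝ :=
  (Measure.count.restrict ((↑) ⁻¹' Icc (-R) R)).map ((↑) : ℤ → ℝ)

instance (R : ℝ) : IsFiniteMeasure (Measure.count.restrict ((↑) ⁻¹' Icc (-R) R : Set ℤ)) :=
  isFiniteMeasure_restrict.2
    (Measure.count_apply_lt_top.2 (finite_intCast_preimage (Metric.isBounded_Icc _ _))).ne

instance (R : ℝ) : IsFiniteMeasure (truncatedIntCount R) :=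
  inferInstanceAs (IsFiniteMeasure (Measure.map _ _))

theorem truncatedIntCount_real (R : ℝ) {s : Set ℝ} (hs : MeasurableSet s) :
    (truncatedIntCount R).real s = ((↑) ⁻¹' (s ∩ Icc (-R) R) : Set ℤ).ncard := by
  rw [truncatedIntCount, map_measureReal_apply .of_discrete hs,
    measureReal_restrict_apply .of_discrete, count_real_eq_ncard .of_discrete, preimage_inter]

theorem pi_truncatedIntCount_real {ι : Type*} [Fintype ι] {R : ℝ} {P : Set (ι → ℝ)}
    (hP : MeasurableSet P) (hPR : P ⊆ univ.pi fun _ ↦ Icc (-R) R) :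
    (Measure.pi fun _ ↦ truncatedIntCount R).real P =
      ((fun (z : ι → ℤ) i ↦ (z i : ℝ)) ⁻¹' P).ncard := by
  simp only [truncatedIntCount]
  rw [← Measure.pi_map_pi fun _ ↦ Measurable.of_discrete.aemeasurable, ← Measure.restrict_pi_pi,
    pi_count, map_measureReal_apply .of_discrete hP, measureReal_restrict_apply .of_discrete,
    count_real_eq_ncard .of_discrete, inter_eq_left.2]
  exact fun z hz i _ ↦ hPR hz i trivial

theorem abs_ncard_intCast_preimage_sub_volume_pi_le {n : ℕ} {R : ℝ} (hR : 0 ≤ R)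
    {P : Set (Fin n → ℝ)} (hP : MeasurableSet P) (hPc : SeparatelyConvex P)
    (hPR : P ⊆ univ.pi fun _ ↦ Icc (-R) R) :
    |(((fun (z : Fin n → ℤ) i ↦ (z i : ℝ)) ⁻¹' P).ncard : ℝ) - volume.real P| ≤
      n * (2 * R + 1) ^ (n - 1) := by
  have h_int_mass : (truncatedIntCount R).real univ ≤ 2 * R + 1 := by
    rw [truncatedIntCount_real R .univ, univ_inter]
    linarith [ncard_intCast_preimage_Icc_le (neg_le_self hR)]
  have h_vol_mass : (volume.restrict (Icc (-R) R)).real univ ≤ 2 * R + 1 := by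
    rw [measureReal_restrict_apply_univ, Real.volume_real_Icc_of_le (neg_le_self hR)]
    linarith
  have h_volume : (Measure.pi fun _ ↦ volume.restrict (Icc (-R) R)).real P = volume.real P := by
    rw [← Measure.restrict_pi_pi, measureReal_restrict_apply hP, inter_eq_left.2 hPR, volume_pi]
  rw [← pi_truncatedIntCount_real hP hPR, ← h_volume]
  refine (abs_pi_real_sub_pi_real_le (D := 1) h_int_mass h_vol_mass hP fun x i ↦ ?_).trans_eq
    (by rw [mul_one])
  have h_section := (hPc x i).measurableSet
  rw [truncatedIntCount_real R h_section, measureReal_restrict_apply h_section]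
  exact abs_ncard_intCast_preimage_sub_volume_le ((hPc x i).inter ordConnected_Icc)
    ((Metric.isBounded_Icc _ _).subset inter_subset_right)

end IntegerPoints

section RescaledLattice

variable {n k : ℕ}

/-- For `k ≠ 0`, the dilate `k • P`, which turns points of `P ∩ ℤⁿ/k` into integer points. It lives
in `Fin n → ℝ`, where Lebesgue measure is a product measure. -/
def dilate (k : ℕ) (P : Set (EuclideanSpace ℝ (Fin n))) : Set (Fin n → ℝ) :=
  ((k : ℝ)⁻¹ • ·) ⁻¹' (WithLp.toLp 2 ⁻¹' P)

theorem ncard_intCast_preimage_dilate (hk : k ≠ 0) (P : Set (EuclideanSpace ℝ (Fin n))) :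
    ((fun (z : Fin n → ℤ) i ↦ (z i : ℝ)) ⁻¹' dilate k P).ncard = (P ∩ lpts n k).ncard := by
  have hk' : (k : ℝ) ≠ 0 := Nat.cast_ne_zero.2 hk
  let e (z : Fin n → ℤ) : EuclideanSpace ℝ (Fin n) :=
    WithLp.toLp 2 ((k : ℝ)⁻¹ • fun i ↦ (z i : ℝ))
  have he : Function.Injective e := fun z w h ↦ funext fun i ↦ by
    simpa [e, hk'] using congrArg (· i) h
  have h_range : range e = lpts n k := by
    ext x
    constructor
    · rintro ⟨z, rfl⟩ i
      exact ⟨z i, by simp [e, hk']⟩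
    · intro hx
      choose z hz using hx
      refine ⟨z, ?_⟩
      ext i
      simp [e, ← hz, hk']
  have h_preimage : (fun (z : Fin n → ℤ) i ↦ (z i : ℝ)) ⁻¹' dilate k P = e ⁻¹' P := rfl
  rw [h_preimage, ← ncard_image_of_injective _ he, image_preimage_eq_inter_range, h_range]

theorem volume_real_dilate (hk : k ≠ 0) {P : Set (EuclideanSpace ℝ (Fin n))}
    (hP : MeasurableSet P) : volume.real (dilate k P) = volume.real P * (k : ℝ) ^ n := by
  have hk' : (k : ℝ)⁻¹ ≠ 0 := inv_ne_zero (Nat.cast_ne_zero.2 hk)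
  rw [dilate, Measure.real, Measure.addHaar_preimage_smul volume hk',
    (PiLp.volume_preserving_toLp (Fin n)).measure_preimage hP.nullMeasurableSet]
  simp [Measure.real, mul_comm]

theorem dilate_subset_pi_Icc {R : ℝ} {P : Set (EuclideanSpace ℝ (Fin n))}
    (hk : k ≠ 0) (hPR : ∀ x ∈ P, ‖x‖ ≤ R) :
    dilate k P ⊆ univ.pi fun _ ↦ Icc (-(k * R)) (k * R) := by
  intro y hy i _
  have h_coord : |(k : ℝ)⁻¹ * y i| ≤ R :=
    (PiLp.norm_apply_le (WithLp.toLp 2 ((k : ℝ)⁻¹ • y)) i).trans (hPR _ hy)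
  rw [abs_mul, abs_inv, Nat.abs_cast, inv_mul_le_iff₀ (by positivity)] at h_coord
  exact abs_le.1 h_coord

theorem abs_ncard_inter_lpts_sub_volume_le {R : ℝ} (hR : 0 ≤ R) (hk : k ≠ 0)
    {P : Set (EuclideanSpace ℝ (Fin n))} (hP : MeasurableSet P)
    (hPc : SeparatelyConvex (WithLp.toLp 2 ⁻¹' P)) (hPR : ∀ x ∈ P, ‖x‖ ≤ R) :
    |((P ∩ lpts n k).ncard : ℝ) - volume.real P * (k : ℝ) ^ n| ≤
      n * (2 * R + 1) ^ (n - 1) * (k : ℝ) ^ (n - 1) := by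
  have h_meas : MeasurableSet (dilate k P) :=
    ((PiLp.volume_preserving_toLp (Fin n)).measurable hP).preimage (measurable_const_smul _)
  rw [← ncard_intCast_preimage_dilate hk, ← volume_real_dilate hk hP]
  calc
    _ ≤ n * (2 * (k * R) + 1) ^ (n - 1) :=
      abs_ncard_intCast_preimage_sub_volume_pi_le (by positivity) h_meas
        (hPc.preimage_smul (by positivity)) (dilate_subset_pi_Icc hk hPR)
    _ ≤ n * ((2 * R + 1) * k) ^ (n - 1) := by
      have hk_one : (1 : ℝ) ≤ k := Nat.one_le_cast.2 (Nat.one_le_iff_ne_zero.2 hk)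
      gcongr
      linarith
    _ = n * (2 * R + 1) ^ (n - 1) * (k : ℝ) ^ (n - 1) := by rw [mul_pow, mul_assoc]

end RescaledLattice

theorem stmt0_general (n : ℕ) (hn : 1 ≤ n) (K : Set (EuclideanSpace ℝ (Fin n)))
    (hK : Bornology.IsBounded K) :
    ∃ C : ℝ, 0 < C ∧ ∀ P : Set (EuclideanSpace ℝ (Fin n)),
      P ⊆ K → MeasurableSet P → SeparatelyConvex (WithLp.toLp 2 ⁻¹' P) →
      ∀ k : ℕ, 1 ≤ k →
        |((P ∩ lpts n k).ncard : ℝ) - (volume P).toReal * (k : ℝ) ^ n|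
          ≤ C * (k : ℝ) ^ (n - 1) := by
  obtain ⟨R, hR, hKR⟩ := hK.exists_pos_norm_le
  exact ⟨n * (2 * R + 1) ^ (n - 1), by positivity, fun P hPK hP hPc k hk ↦
    abs_ncard_inter_lpts_sub_volume_le hR.le (Nat.one_le_iff_ne_zero.1 hk) hP hPc
      fun x hx ↦ hKR x (hPK hx)⟩

theorem stmt0 (n : ℕ) (hn : 1 ≤ n) (K : Set (EuclideanSpace ℝ (Fin n)))
    (hKne : K.Nonempty) (hKcp : IsCompact K) (hKcv : Convex ℝ K)
    (ν : ℝ) (hν : 0 < ν) (hνK : ν ≤ (volume K).toReal) :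
    ∃ C : ℝ, 0 < C ∧ ∀ P : Set (EuclideanSpace ℝ (Fin n)),
      P ⊆ K → P.Nonempty → IsCompact P → Convex ℝ P → ν ≤ (volume P).toReal →
      ∀ k : ℕ, 1 ≤ k →
        |((P ∩ lpts n k).ncard : ℝ) - (volume P).toReal * (k : ℝ) ^ n|
          ≤ C * (k : ℝ) ^ (n - 1) := by
  obtain ⟨C, hC, h⟩ := stmt0_general n hn K hKcp.isBounded
  exact ⟨C, hC, fun P hPK _ hP hPc _ ↦ h P hPK hP.measurableSet
    (separatelyConvex_of_convex
      (hPc.linear_preimage (WithLp.linearEquiv 2 ℝ (Fin n → ℝ)).symm.toLinearMap))⟩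
end

section
/- Let n ≥ 1 and let K ⊂ ℝⁿ be a convex body. Then there exists a constant C = C(K) > 0 such that for every convex body P ⊆ K, every nonnegative concave function G defined on P, and every integer k ≥ 1, one has (1/kⁿ) · Σ_{x ∈ P ∩ ℤⁿ/k} G(x) ≤ ∫_P G(x) dx + (C/k) · sup_P G. -/
open MeasureTheory Set

/-!
Only the convexity of the superlevel sets of `G` matters. In dimension one, a quasiconcave function
on a cell `[mh, (m + 1)h]` is at least the smaller of its two endpoint values, and a unimodal
sequence loses at most its maximum when each term is replaced by the minimum of two neighbours.
So the Riemann sum of mesh `h` exceeds the integral by at most `h` times the supremum.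
In dimension `n` the coordinates are traded one at a time, a sum for an integral. Each trade costs
at most `h · sup G` on a set of lines of measure at most `(2r + h)ⁿ⁻¹`, where `G` is supported in
`[-r, r]ⁿ`.
-/

open scoped ENNReal

section Quasiconcave

lemma quasiconcaveOn_univ_comp_affineMap {𝕜 E F β : Type*} [Ring 𝕜] [PartialOrder 𝕜]
    [AddCommGroup E] [Module 𝕜 E] [AddCommGroup F] [Module 𝕜 F] [LE β] {f : F → β}
    (hf : QuasiconcaveOn 𝕜 univ f) (g : E →ᵃ[𝕜] F) : QuasiconcaveOn 𝕜 univ (f ∘ g) := fun t ↦ by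
  simpa using (hf t).affine_preimage g

lemma quasiconcaveOn_univ_indicator {𝕜 E β : Type*} [Semiring 𝕜] [PartialOrder 𝕜]
    [AddCommMonoid E] [Module 𝕜 E] [AddZeroClass β] [PartialOrder β] [CanonicallyOrderedAdd β]
    {s : Set E} {f : E → β} (hf : QuasiconcaveOn 𝕜 s f) :
    QuasiconcaveOn 𝕜 univ (s.indicator f) := fun t ↦ by
  rcases eq_or_ne t 0 with rfl | ht
  · simpa using convex_univ
  · convert hf t using 1
    ext x
    by_cases hx : x ∈ s <;> simp [hx, ht]

lemma min_le_of_quasiconcaveOn_univ_of_mem_Icc {𝕜 β : Type*} [Field 𝕜] [LinearOrder 𝕜]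
    [IsStrictOrderedRing 𝕜] [LinearOrder β] {f : 𝕜 → β}
    (hf : QuasiconcaveOn 𝕜 univ f) {x y z : 𝕜} (hy : y ∈ Icc x z) : min (f x) (f z) ≤ f y :=
  ((hf (min (f x) (f z))).ordConnected.out ⟨mem_univ x, min_le_left _ _⟩
    ⟨mem_univ z, min_le_right _ _⟩ hy).2

section Measurability

variable {E β : Type*} [NormedAddCommGroup E] [NormedSpace ℝ E] [FiniteDimensional ℝ E]
  [MeasurableSpace E] [BorelSpace E] {μ : Measure E} [μ.IsAddHaarMeasure]
  [TopologicalSpace β] [LinearOrder β] [OrderTopology β] [SecondCountableTopology β]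
  [MeasurableSpace β] [BorelSpace β] {f : E → β}

lemma aemeasurable_restrict_of_quasiconcaveOn {s : Set E} (hf : QuasiconcaveOn ℝ s f) :
    AEMeasurable f (μ.restrict s) := by
  have hmeas : @Measurable (NullMeasurableSpace E (μ.restrict s)) β _ _ f :=
    measurable_of_Ici fun t ↦ by
      change NullMeasurableSet (f ⁻¹' Ici t) (μ.restrict s)
      rw [nullMeasurableSet_restrict (hf.convex.nullMeasurableSet μ), inter_comm]
      exact (hf t).nullMeasurableSet μ
  exact NullMeasurable.aemeasurable hmeas

lemma aemeasurable_of_quasiconcaveOn_univ (hf : QuasiconcaveOn ℝ univ f) : AEMeasurable f μ := by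
  simpa only [Measure.restrict_univ] using aemeasurable_restrict_of_quasiconcaveOn (μ := μ) hf

end Measurability

variable {n : ℕ} {β : Type*} [LE β] {F : (Fin (n + 1) → ℝ) → β}

lemma quasiconcaveOn_univ_comp_cons_left (hF : QuasiconcaveOn ℝ univ F) (y : Fin n → ℝ) :
    QuasiconcaveOn ℝ univ fun x : ℝ ↦ F (Fin.cons x y) :=
  quasiconcaveOn_univ_comp_affineMap hF <|
    (Fin.consLinearEquiv ℝ fun _ : Fin (n + 1) ↦ ℝ).toLinearMap.toAffineMap.comp
      ((AffineMap.id ℝ ℝ).prod (AffineMap.const ℝ ℝ y))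

lemma quasiconcaveOn_univ_comp_cons_right (hF : QuasiconcaveOn ℝ univ F) (x : ℝ) :
    QuasiconcaveOn ℝ univ fun y : Fin n → ℝ ↦ F (Fin.cons x y) :=
  quasiconcaveOn_univ_comp_affineMap hF <|
    (Fin.consLinearEquiv ℝ fun _ : Fin (n + 1) ↦ ℝ).toLinearMap.toAffineMap.comp
      ((AffineMap.const ℝ (Fin n → ℝ) x).prod (AffineMap.id ℝ (Fin n → ℝ)))

end Quasiconcave

section Concave

variable {E : Type*} [NormedAddCommGroup E] [NormedSpace ℝ E] [FiniteDimensional ℝ E] {s : Set E}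

-- A relative interior point `q` works: `s` contains a small relative ball around it.
lemma exists_forall_lineMap_neg_mem (hs : Convex ℝ s) (hne : s.Nonempty)
    (hbdd : Bornology.IsBounded s) :
    ∃ q ∈ s, ∃ ε > (0 : ℝ), ∀ x ∈ s, AffineMap.lineMap q x (-ε) ∈ s := by
  obtain ⟨_, hp⟩ := hne.intrinsicInterior hs
  obtain ⟨q, hq, rfl⟩ := mem_intrinsicInterior.1 hp
  obtain ⟨δ, hδ, hball⟩ := Metric.mem_nhds_iff.1 (mem_interior_iff_mem_nhds.1 hq)
  obtain ⟨R, hR, hsR⟩ := hbdd.subset_ball_lt 0 (q : E)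
  refine ⟨q, intrinsicInterior_subset hp, δ / R, by positivity, fun x hx ↦ ?_⟩
  have hspan : AffineMap.lineMap (q : E) x (-(δ / R)) ∈ affineSpan ℝ s :=
    AffineMap.lineMap_mem _ q.2 (subset_affineSpan ℝ s hx)
  refine @hball ⟨_, hspan⟩ ?_
  rw [Metric.mem_ball, Subtype.dist_eq, dist_lineMap_left, norm_neg,
    Real.norm_of_nonneg (by positivity), dist_comm]
  calc δ / R * dist x q < δ / R * R := by gcongr; exact hsR hx
    _ = δ := div_mul_cancel₀ δ hR.ne'

lemma bddAbove_image_of_concaveOn {G : E → ℝ} (hG : ConcaveOn ℝ s G)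
    (hbdd : Bornology.IsBounded s) (hbelow : BddBelow (G '' s)) : BddAbove (G '' s) := by
  rcases s.eq_empty_or_nonempty with rfl | hne
  · simp
  obtain ⟨q, -, ε, hε, hreflect⟩ := exists_forall_lineMap_neg_mem hG.1 hne hbdd
  obtain ⟨m, hm⟩ := hbelow
  refine ⟨((1 + ε) * G q - m) / ε, ?_⟩
  rintro _ ⟨x, hx, rfl⟩
  set w := AffineMap.lineMap q x (-ε) with hw
  have hqw : (ε / (1 + ε)) • x + (1 / (1 + ε)) • w = q := by
    rw [hw, AffineMap.lineMap_apply_module]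
    match_scalars <;> field_simp <;> ring
  have hconc : ε / (1 + ε) * G x + 1 / (1 + ε) * G w ≤ G q := by
    rw [← hqw]
    exact hG.2 hx (hreflect x hx) (by positivity) (by positivity) (by field_simp; ring)
  have hmw : m ≤ G w := hm ⟨w, hreflect x hx, rfl⟩
  rw [le_div_iff₀ hε]
  field_simp at hconc
  linarith

end Concave

section OneDimensional

-- If `p` is a maximum, the term at `m < p` is charged to the pair `(m, m + 1)` and the term at
-- `m > p` to the pair `(m - 1, m)`; no pair is charged twice.
lemma tsum_le_tsum_min_add {a : ℤ → ℝ≥0∞} {M : ℝ≥0∞}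
    (ha : ∀ ⦃i j l⦄, i ≤ j → j ≤ l → min (a i) (a l) ≤ a j) (hM : ∀ m, a m ≤ M) :
    ∑' m, a m ≤ ∑' m, min (a m) (a (m + 1)) + M := by
  classical
  refine ENNReal.summable.tsum_le_of_sum_le fun s ↦ ?_
  rcases s.eq_empty_or_nonempty with rfl | hs
  · simp
  obtain ⟨p, hp, hmax⟩ := s.exists_max_image a hs
  let pair : ℤ → ℤ := fun m ↦ if m < p then m else m - 1
  have pair_injOn : InjOn pair (s.erase p) := by
    intro i hi j hj hij
    have := Finset.ne_of_mem_erase hi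
    have := Finset.ne_of_mem_erase hj
    grind
  have le_min_pair : ∀ m ∈ s.erase p, a m ≤ min (a (pair m)) (a (pair m + 1)) := by
    intro m hm
    have ham : a m ≤ a p := hmax m (Finset.mem_of_mem_erase hm)
    rcases (Finset.ne_of_mem_erase hm).lt_or_gt with hlt | hgt
    · have hnext : min (a m) (a p) ≤ a (m + 1) := ha (by lia) (by lia)
      simpa [pair, hlt, min_eq_left ham] using hnext
    · have hprev : min (a p) (a m) ≤ a (m - 1) := ha (by lia) (by lia)
      simpa [pair, hgt.not_gt, min_eq_right ham] using hprev
  calc ∑ m ∈ s, a m = ∑ m ∈ s.erase p, a m + a p := (Finset.sum_erase_add s a hp).symm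
    _ ≤ ∑ m ∈ s.erase p, min (a (pair m)) (a (pair m + 1)) + M :=
        add_le_add (Finset.sum_le_sum le_min_pair) (hM p)
    _ = ∑ m ∈ (s.erase p).image pair, min (a m) (a (m + 1)) + M := by
        rw [Finset.sum_image pair_injOn]
    _ ≤ ∑' m, min (a m) (a (m + 1)) + M := by gcongr; exact ENNReal.sum_le_tsum _

variable {h : ℝ}

lemma tsum_mul_min_le_lintegral {f : ℝ → ℝ≥0∞} (hf : QuasiconcaveOn ℝ univ f) (hh : 0 < h) :
    ∑' m : ℤ, ENNReal.ofReal h * min (f (m • h)) (f ((m + 1) • h)) ≤ ∫⁻ x, f x := by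
  have hvol (m : ℤ) : volume (Ico (m • h) ((m + 1) • h)) = ENNReal.ofReal h := by
    rw [Real.volume_Ico, ← sub_smul, add_sub_cancel_left, one_smul]
  calc ∑' m : ℤ, ENNReal.ofReal h * min (f (m • h)) (f ((m + 1) • h))
      ≤ ∑' m : ℤ, ∫⁻ x in Ico (m • h) ((m + 1) • h), f x := by
        refine ENNReal.tsum_le_tsum fun m ↦ ?_
        rw [← hvol m, mul_comm, ← setLIntegral_const]
        exact setLIntegral_mono' measurableSet_Ico fun x hx ↦
          min_le_of_quasiconcaveOn_univ_of_mem_Icc hf (Ico_subset_Icc_self hx)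
    _ = ∫⁻ x, f x := by
        rw [← lintegral_iUnion (fun _ ↦ measurableSet_Ico) (pairwise_disjoint_Ico_zsmul h),
          iUnion_Ico_zsmul hh, Measure.restrict_univ]

lemma mul_tsum_le_lintegral_add {f : ℝ → ℝ≥0∞} (hf : QuasiconcaveOn ℝ univ f) {M : ℝ≥0∞}
    (hM : ∀ x, f x ≤ M) (hh : 0 < h) :
    ENNReal.ofReal h * ∑' m : ℤ, f (m • h) ≤ (∫⁻ x, f x) + ENNReal.ofReal h * M := by
  have hunimodal ⦃i j l : ℤ⦄ (hij : i ≤ j) (hjl : j ≤ l) :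
      min (f (i • h)) (f (l • h)) ≤ f (j • h) :=
    min_le_of_quasiconcaveOn_univ_of_mem_Icc hf
      ⟨zsmul_le_zsmul_left hh.le hij, zsmul_le_zsmul_left hh.le hjl⟩
  calc ENNReal.ofReal h * ∑' m : ℤ, f (m • h)
      ≤ ENNReal.ofReal h * (∑' m : ℤ, min (f (m • h)) (f ((m + 1) • h)) + M) := by
        gcongr; exact tsum_le_tsum_min_add hunimodal fun m ↦ hM _
    _ ≤ (∫⁻ x, f x) + ENNReal.ofReal h * M := by
        rw [mul_add, ← ENNReal.tsum_mul_left]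
        gcongr
        exact tsum_mul_min_le_lintegral hf hh

lemma mul_tsum_indicator_closedBall_le {r : ℝ} (hr : 0 ≤ r) (hh : 0 < h) (M : ℝ≥0∞) :
    ENNReal.ofReal h * ∑' m : ℤ, (Metric.closedBall (0 : ℝ) r).indicator (fun _ ↦ M) (m • h) ≤
      ENNReal.ofReal (2 * r + h) * M := by
  have hquasi : QuasiconcaveOn ℝ univ ((Metric.closedBall (0 : ℝ) r).indicator fun _ ↦ M) :=
    quasiconcaveOn_univ_indicator <|
      (convex_closedBall 0 r).quasiconcaveOn_of_convex_ge fun t ↦ by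
        by_cases ht : t ≤ M <;> simp [ht, convex_univ, convex_empty]
  calc _ ≤ (∫⁻ x, (Metric.closedBall (0 : ℝ) r).indicator (fun _ ↦ M) x) + ENNReal.ofReal h * M :=
        mul_tsum_le_lintegral_add hquasi (indicator_le_self _ _) hh
    _ = ENNReal.ofReal (2 * r + h) * M := by
        rw [lintegral_indicator_const measurableSet_closedBall, Real.volume_closedBall,
          ENNReal.ofReal_add (by positivity) hh.le]
        ring

end OneDimensional

section GridSum

variable {n : ℕ} {r h : ℝ} {M : ℝ≥0∞}

/-- The Riemann sum `hⁿ ∑_{x ∈ hℤⁿ} F x` of mesh `h`. It takes values in `[0, ∞]`, so that no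
summability has to be tracked; a negative `h` is read as mesh `0`. -/
noncomputable def gridSum (h : ℝ) (F : (Fin n → ℝ) → ℝ≥0∞) : ℝ≥0∞ :=
  ENNReal.ofReal h ^ n * ∑' z : Fin n → ℤ, F fun i ↦ z i • h

lemma gridSum_succ (h : ℝ) (F : (Fin (n + 1) → ℝ) → ℝ≥0∞) :
    gridSum h F =
      ENNReal.ofReal h * ∑' m : ℤ, gridSum h fun y : Fin n → ℝ ↦ F (Fin.cons (m • h) y) := by
  have hcons (p : ℤ × (Fin n → ℤ)) :
      (fun i ↦ (Fin.consEquiv (fun _ ↦ ℤ) p) i • h : Fin (n + 1) → ℝ) =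
        Fin.cons (p.1 • h) fun i ↦ p.2 i • h := by
    ext i
    cases i using Fin.cases <;> rfl
  simp only [gridSum, ENNReal.tsum_mul_left]
  rw [← (Fin.consEquiv fun _ ↦ ℤ).tsum_eq, ENNReal.tsum_prod', pow_succ', mul_assoc]
  simp only [hcons]

lemma lintegral_eq_lintegral_lintegral_cons {F : (Fin (n + 1) → ℝ) → ℝ≥0∞} (hF : AEMeasurable F) :
    ∫⁻ x, F x = ∫⁻ y : Fin n → ℝ, ∫⁻ x : ℝ, F (Fin.cons x y) := by
  have hcons := (volume_preserving_piFinSuccAbove (fun _ : Fin (n + 1) ↦ ℝ) 0).symm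
  rw [← hcons.lintegral_comp_emb (MeasurableEquiv.measurableEmbedding _)]
  refine (lintegral_prod_symm _ ?_).trans ?_
  · exact hF.comp_quasiMeasurePreserving hcons.quasiMeasurePreserving
  · simp only [MeasurableEquiv.piFinSuccAbove, MeasurableEquiv.symm_mk, MeasurableEquiv.coe_mk,
      Fin.insertNthEquiv_zero, Equiv.symm_symm]
    rfl

lemma indicator_closedBall_zero_cons (hr : 0 ≤ r) (M : ℝ≥0∞) (x : ℝ) (y : Fin n → ℝ) :
    (Metric.closedBall 0 r).indicator (fun _ ↦ M) (Fin.cons x y : Fin (n + 1) → ℝ) =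
      (Metric.closedBall 0 r).indicator
        (fun _ ↦ (Metric.closedBall 0 r).indicator (fun _ ↦ M) x) y := by
  classical
  have hmem : (Fin.cons x y : Fin (n + 1) → ℝ) ∈ Metric.closedBall 0 r ↔
      y ∈ Metric.closedBall 0 r ∧ x ∈ Metric.closedBall 0 r := by
    simp [pi_norm_le_iff_of_nonneg hr, Fin.forall_fin_succ, and_comm]
  simp only [indicator_apply, hmem, ite_and]

lemma mul_tsum_lintegral_cons_le {F : (Fin (n + 1) → ℝ) → ℝ≥0∞} (hF : QuasiconcaveOn ℝ univ F)
    (hr : 0 ≤ r) (hh : 0 < h)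
    (hFM : ∀ x, F x ≤ (Metric.closedBall 0 r).indicator (fun _ ↦ M) x) :
    ENNReal.ofReal h * ∑' m : ℤ, ∫⁻ y : Fin n → ℝ, F (Fin.cons (m • h) y) ≤
      (∫⁻ x, F x) + ENNReal.ofReal h * (ENNReal.ofReal (2 * r + h) ^ n * M) := by
  set B := Metric.closedBall (0 : Fin n → ℝ) r
  have hB : MeasurableSet B := measurableSet_closedBall
  have hline (y : Fin n → ℝ) (x : ℝ) : F (Fin.cons x y) ≤ B.indicator (fun _ ↦ M) y := by
    refine (hFM _).trans ?_
    rw [indicator_closedBall_zero_cons hr]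
    exact indicator_le_indicator (indicator_le_self _ _ x)
  calc ENNReal.ofReal h * ∑' m : ℤ, ∫⁻ y : Fin n → ℝ, F (Fin.cons (m • h) y)
      = ∫⁻ y : Fin n → ℝ, ENNReal.ofReal h * ∑' m : ℤ, F (Fin.cons (m • h) y) := by
        rw [lintegral_const_mul' _ _ ENNReal.ofReal_ne_top, lintegral_tsum fun m ↦
          aemeasurable_of_quasiconcaveOn_univ (quasiconcaveOn_univ_comp_cons_right hF _)]
    _ ≤ ∫⁻ y : Fin n → ℝ, ((∫⁻ x, F (Fin.cons x y)) +
          ENNReal.ofReal h * B.indicator (fun _ ↦ M) y) :=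
        lintegral_mono fun y ↦
          mul_tsum_le_lintegral_add (quasiconcaveOn_univ_comp_cons_left hF y) (hline y) hh
    _ = (∫⁻ x, F x) + ENNReal.ofReal h * (M * volume B) := by
        rw [lintegral_add_right _ ((measurable_const.indicator hB).const_mul _),
          ← lintegral_eq_lintegral_lintegral_cons (aemeasurable_of_quasiconcaveOn_univ hF),
          lintegral_const_mul' _ _ ENNReal.ofReal_ne_top, lintegral_indicator_const hB]
    _ ≤ (∫⁻ x, F x) + ENNReal.ofReal h * (ENNReal.ofReal (2 * r + h) ^ n * M) := by
        rw [mul_comm M, Real.volume_pi_closedBall _ hr, Fintype.card_fin,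
          ENNReal.ofReal_pow (by positivity)]
        gcongr
        linarith

theorem gridSum_le_lintegral_add {F : (Fin n → ℝ) → ℝ≥0∞} (hF : QuasiconcaveOn ℝ univ F)
    (hr : 0 ≤ r) (hh : 0 < h)
    (hFM : ∀ x, F x ≤ (Metric.closedBall 0 r).indicator (fun _ ↦ M) x) :
    gridSum h F ≤
      (∫⁻ x, F x) + n * ENNReal.ofReal h * ENNReal.ofReal (2 * r + h) ^ (n - 1) * M := by
  induction n generalizing M with
  | zero =>
    have hF₀ (x : Fin 0 → ℝ) : F x = F 0 := congrArg F (Subsingleton.elim _ _)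
    simp [gridSum, hF₀ fun _ ↦ _, volume_pi, lintegral_unique]
  | succ n ih =>
    set s := ENNReal.ofReal (2 * r + h)
    set c : ℝ≥0∞ := n * ENNReal.ofReal h * s ^ (n - 1) with hc
    have hslice (x : ℝ) : gridSum h (fun y : Fin n → ℝ ↦ F (Fin.cons x y)) ≤
        (∫⁻ y : Fin n → ℝ, F (Fin.cons x y)) +
          c * (Metric.closedBall 0 r).indicator (fun _ ↦ M) x :=
      ih (quasiconcaveOn_univ_comp_cons_right hF x) fun y ↦
        (hFM _).trans_eq (indicator_closedBall_zero_cons hr M x y)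
    calc gridSum h F
        ≤ ENNReal.ofReal h * ∑' m : ℤ, ((∫⁻ y : Fin n → ℝ, F (Fin.cons (m • h) y)) +
            c * (Metric.closedBall 0 r).indicator (fun _ ↦ M) (m • h)) := by
          rw [gridSum_succ]
          gcongr
          exact hslice _
      _ = ENNReal.ofReal h * ∑' m : ℤ, (∫⁻ y : Fin n → ℝ, F (Fin.cons (m • h) y)) +
            c * (ENNReal.ofReal h *
              ∑' m : ℤ, (Metric.closedBall 0 r).indicator (fun _ ↦ M) (m • h)) := by
          rw [ENNReal.tsum_add, ENNReal.tsum_mul_left]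
          ring
      _ ≤ (∫⁻ x, F x) + ENNReal.ofReal h * (s ^ n * M) + c * (s * M) := by
          gcongr ?_ + c * ?_
          · exact mul_tsum_lintegral_cons_le hF hr hh hFM
          · exact mul_tsum_indicator_closedBall_le hr hh M
      _ = (∫⁻ x, F x) + (n + 1 : ℕ) * ENNReal.ofReal h * s ^ n * M := by
          have hpow : n * s ^ (n - 1) * s = n * s ^ n := by
            cases n <;> simp [pow_succ, mul_assoc]
          calc _ = (∫⁻ x, F x) + ENNReal.ofReal h * M * (s ^ n + n * s ^ (n - 1) * s) := by
                rw [hc]; ring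
            _ = _ := by rw [hpow]; push_cast; ring

end GridSum

section Lattice

variable {n k : ℕ}

lemma ofReal_finsum_le_tsum {ι : Type*} {f : ι → ℝ} (hf : ∀ i, 0 ≤ f i) :
    ENNReal.ofReal (∑ᶠ i, f i) ≤ ∑' i, ENNReal.ofReal (f i) := by
  by_cases hfin : f.support.Finite
  · rw [finsum_eq_sum f hfin, ENNReal.ofReal_sum_of_nonneg fun i _ ↦ hf i]
    exact ENNReal.sum_le_tsum _
  · simp [finsum_of_infinite_support hfin]

/-- The point `z / k` of `ℤⁿ/k` with integer coordinates `z`, in the Euclidean model of `ℝⁿ`. -/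
noncomputable def latticePoint (k : ℕ) (z : Fin n → ℤ) : EuclideanSpace ℝ (Fin n) :=
  WithLp.toLp 2 fun i ↦ z i • (k : ℝ)⁻¹

lemma latticePoint_injective (hk : k ≠ 0) :
    Function.Injective (latticePoint k : (Fin n → ℤ) → EuclideanSpace ℝ (Fin n)) := by
  intro z w hzw
  ext i
  simpa [latticePoint, hk] using congr($hzw i)

lemma range_latticePoint (hk : k ≠ 0) : range (latticePoint k) = lpts n k := by
  have hk' : (k : ℝ) ≠ 0 := Nat.cast_ne_zero.2 hk
  ext x
  constructor
  · rintro ⟨z, rfl⟩ i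
    exact ⟨z i, by simp [latticePoint, mul_left_comm, hk']⟩
  · intro hx
    choose z hz using hx
    refine ⟨z, ?_⟩
    ext i
    simp [latticePoint, ← hz, mul_right_comm, hk']

variable {P : Set (EuclideanSpace ℝ (Fin n))} {G : EuclideanSpace ℝ (Fin n) → ℝ}

lemma ofReal_mul_finsum_lpts_le_gridSum (hk : k ≠ 0) (hG : ∀ x ∈ P, 0 ≤ G x) :
    ENNReal.ofReal (1 / (k : ℝ) ^ n * ∑ᶠ x ∈ P ∩ lpts n k, G x) ≤
      gridSum (k : ℝ)⁻¹ (P.indicator (ENNReal.ofReal ∘ G) ∘ WithLp.toLp 2) := by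
  have hsum : ∑ᶠ x ∈ P ∩ lpts n k, G x = ∑ᶠ z : Fin n → ℤ, P.indicator G (latticePoint k z) := by
    rw [← finsum_mem_range (latticePoint_injective hk), range_latticePoint hk, finsum_mem_def,
      finsum_mem_def, indicator_indicator, inter_comm]
  rw [hsum, one_div, ← inv_pow, ENNReal.ofReal_mul (by positivity),
    ENNReal.ofReal_pow (by positivity), gridSum]
  gcongr
  refine (ofReal_finsum_le_tsum fun z ↦ indicator_nonneg hG _).trans_eq (tsum_congr fun z ↦ ?_)
  exact congr_fun (indicator_comp_of_zero (g := ENNReal.ofReal) ENNReal.ofReal_zero).symm _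

lemma lintegral_indicator_ofReal_comp_toLp {M : ℝ} (hGq : QuasiconcaveOn ℝ P G)
    (hG : ∀ x ∈ P, 0 ≤ G x) (hM : ∀ x ∈ P, G x ≤ M) (hP : Bornology.IsBounded P) :
    ∫⁻ x : Fin n → ℝ, P.indicator (ENNReal.ofReal ∘ G) (WithLp.toLp 2 x) =
      ENNReal.ofReal (∫ x in P, G x) := by
  have hPm : NullMeasurableSet P := hGq.convex.nullMeasurableSet volume
  have hmeas : AEStronglyMeasurable G (volume.restrict P) :=
    (aemeasurable_restrict_of_quasiconcaveOn hGq).aestronglyMeasurable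
  have hint : IntegrableOn G P := by
    refine IntegrableOn.of_bound hP.measure_lt_top hmeas M ?_
    filter_upwards [ae_restrict_mem₀ hPm] with x hx
    rw [Real.norm_of_nonneg (hG x hx)]
    exact hM x hx
  rw [(PiLp.volume_preserving_toLp (Fin n)).lintegral_comp_emb
      (MeasurableEquiv.toLp 2 _).measurableEmbedding, lintegral_indicator₀ hPm,
    ofReal_integral_eq_lintegral_ofReal hint ((ae_restrict_mem₀ hPm).mono hG)]
  rfl

theorem mul_finsum_lpts_le_integral_add {R M : ℝ} (hk : k ≠ 0) (hR : 0 ≤ R)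
    (hPR : P ⊆ Metric.closedBall 0 R) (hGq : QuasiconcaveOn ℝ P G) (hG : ∀ x ∈ P, 0 ≤ G x)
    (hM₀ : 0 ≤ M) (hM : ∀ x ∈ P, G x ≤ M) :
    1 / (k : ℝ) ^ n * ∑ᶠ x ∈ P ∩ lpts n k, G x ≤
      (∫ x in P, G x) + n * (k : ℝ)⁻¹ * (2 * R + (k : ℝ)⁻¹) ^ (n - 1) * M := by
  have hbound (x : Fin n → ℝ) : P.indicator (ENNReal.ofReal ∘ G) (WithLp.toLp 2 x) ≤
      (Metric.closedBall 0 R).indicator (fun _ ↦ ENNReal.ofReal M) x := by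
    by_cases hx : WithLp.toLp 2 x ∈ P
    · have hxR : x ∈ Metric.closedBall 0 R := by
        rw [mem_closedBall_zero_iff, pi_norm_le_iff_of_nonneg hR]
        exact fun i ↦ (PiLp.norm_apply_le _ i).trans (mem_closedBall_zero_iff.1 (hPR hx))
      simpa [hx, hxR] using ENNReal.ofReal_le_ofReal (hM _ hx)
    · simp [hx]
  have hquasi : QuasiconcaveOn ℝ univ (P.indicator (ENNReal.ofReal ∘ G) ∘ WithLp.toLp 2) :=
    quasiconcaveOn_univ_comp_affineMap
      (quasiconcaveOn_univ_indicator (hGq.monotone_comp fun _ _ ↦ ENNReal.ofReal_le_ofReal))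
      (WithLp.linearEquiv 2 ℝ (Fin n → ℝ)).symm.toLinearMap.toAffineMap
  have hI : 0 ≤ ∫ x in P, G x :=
    setIntegral_nonneg_of_ae_restrict <|
      (ae_restrict_mem₀ (hGq.convex.nullMeasurableSet volume)).mono hG
  rw [← ENNReal.ofReal_le_ofReal_iff (by positivity)]
  calc _ ≤ gridSum (k : ℝ)⁻¹ (P.indicator (ENNReal.ofReal ∘ G) ∘ WithLp.toLp 2) :=
        ofReal_mul_finsum_lpts_le_gridSum hk hG
    _ ≤ ENNReal.ofReal (∫ x in P, G x) + n * ENNReal.ofReal (k : ℝ)⁻¹ *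
          ENNReal.ofReal (2 * R + (k : ℝ)⁻¹) ^ (n - 1) * ENNReal.ofReal M := by
        rw [← lintegral_indicator_ofReal_comp_toLp hGq hG hM
          (Metric.isBounded_closedBall.subset hPR)]
        exact gridSum_le_lintegral_add hquasi hR (by positivity) hbound
    _ = _ := by
        rw [ENNReal.ofReal_add hI (by positivity), ENNReal.ofReal_mul (by positivity),
          ENNReal.ofReal_mul (by positivity), ENNReal.ofReal_mul (by positivity),
          ENNReal.ofReal_pow (by positivity), ENNReal.ofReal_natCast]

end Lattice

theorem stmt1_general (n : ℕ) (K : Set (EuclideanSpace ℝ (Fin n))) (hK : Bornology.IsBounded K) :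
    ∃ C : ℝ, 0 < C ∧ ∀ P : Set (EuclideanSpace ℝ (Fin n)), P ⊆ K → P.Nonempty →
      ∀ G : EuclideanSpace ℝ (Fin n) → ℝ, QuasiconcaveOn ℝ P G → (∀ x ∈ P, 0 ≤ G x) →
      BddAbove (G '' P) → ∀ k : ℕ, 1 ≤ k →
        (1 / (k : ℝ) ^ n) * ∑ᶠ x ∈ P ∩ lpts n k, G x
          ≤ (∫ x in P, G x) + (C / (k : ℝ)) * sSup (G '' P) := by
  obtain ⟨R, hR, hKR⟩ := hK.subset_closedBall_lt 0 0
  -- The summand `1` only makes the constant positive for `n = 0`.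
  refine ⟨n * (2 * R + 1) ^ (n - 1) + 1, by positivity,
    fun P hPK ⟨p, hp⟩ G hGq hG hbdd k hk ↦ ?_⟩
  have hM : ∀ x ∈ P, G x ≤ sSup (G '' P) := fun x hx ↦ le_csSup hbdd (mem_image_of_mem G hx)
  have hM₀ : 0 ≤ sSup (G '' P) := (hG p hp).trans (hM p hp)
  have hk_inv : (k : ℝ)⁻¹ ≤ 1 := Nat.cast_inv_le_one k
  calc _ ≤ (∫ x in P, G x) +
          n * (k : ℝ)⁻¹ * (2 * R + (k : ℝ)⁻¹) ^ (n - 1) * sSup (G '' P) :=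
        mul_finsum_lpts_le_integral_add (by lia) hR.le (hPK.trans hKR) hGq hG hM₀ hM
    _ ≤ (∫ x in P, G x) + n * (k : ℝ)⁻¹ * (2 * R + 1) ^ (n - 1) * sSup (G '' P) := by gcongr
    _ = (∫ x in P, G x) + n * (2 * R + 1) ^ (n - 1) / k * sSup (G '' P) := by ring
    _ ≤ (∫ x in P, G x) + (n * (2 * R + 1) ^ (n - 1) + 1) / k * sSup (G '' P) := by
        gcongr; linarith

theorem stmt1 (n : ℕ) (hn : 1 ≤ n) (K : Set (EuclideanSpace ℝ (Fin n)))
    (hKne : K.Nonempty) (hKcp : IsCompact K) (hKcv : Convex ℝ K) :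
    ∃ C : ℝ, 0 < C ∧ ∀ P : Set (EuclideanSpace ℝ (Fin n)),
      P ⊆ K → P.Nonempty → IsCompact P → Convex ℝ P →
      ∀ G : EuclideanSpace ℝ (Fin n) → ℝ, ConcaveOn ℝ P G → (∀ x ∈ P, 0 ≤ G x) →
      ∀ k : ℕ, 1 ≤ k →
        (1 / (k : ℝ) ^ n) * ∑ᶠ x ∈ P ∩ lpts n k, G x
          ≤ (∫ x in P, G x) + (C / (k : ℝ)) * sSup (G '' P) := by
  obtain ⟨C, hC, hbound⟩ := stmt1_general n K hKcp.isBounded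
  exact ⟨C, hC, fun P hPK hPne hPc _ G hG hG₀ ↦ hbound P hPK hPne G hG.quasiconcaveOn hG₀
    (bddAbove_image_of_concaveOn hG hPc.isBounded ⟨0, forall_mem_image.2 hG₀⟩)⟩
end
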